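/- Let δ ∈ D_0 with Σ_δ = {0,1} and let c_δ(x) = b(max(x))·∏_{x_i ≠ max(x)} a(x_i) be the associated density. Then the diagonal section of the copula with density c_δ equals δ: for every r ∈ [0,1], ∫_{[0,1]^d} c_δ(u) 1{max(u) ≤ r} du = δ(r). -/

import Mathlib

open MeasureTheory Set
open scoped Classical

lemma aux_lintegral_pow (f : ℝ → ENNReal) (hf : Measurable f) (n : ℕ) :
    ∫⁻ u : Fin n → ℝ, ∏ k, f (u k) = (∫⁻ s, f s) ^ n := by
  induction n with
  | zero => simp [volume_pi, lintegral_unique]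
  | succ n ih =>
    have e := (volume_preserving_piFinSuccAbove (fun _ : Fin (n+1) => ℝ) 0).symm
    rw [← e.lintegral_comp_emb (MeasurableEquiv.measurableEmbedding _)]
    have : ∀ p : ℝ × (Fin n → ℝ),
        ∏ k, f (((MeasurableEquiv.piFinSuccAbove (fun _ : Fin (n+1) => ℝ) 0).symm p) k)
          = f p.1 * ∏ k, f (p.2 k) := by
      intro p
      rw [Fin.prod_univ_succ]
      simp [MeasurableEquiv.piFinSuccAbove, Fin.insertNthEquiv]
    simp_rw [this]
    rw [Measure.volume_eq_prod, lintegral_prod _ (by fun_prop)]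
    have h2 : ∀ x : ℝ, ∫⁻ y : Fin n → ℝ, f (x, y).1 * ∏ k, f ((x, y).2 k)
        = f x * (∫⁻ s, f s) ^ n := by
      intro x
      rw [← ih, ← lintegral_const_mul _ (by fun_prop)]
    simp_rw [h2]
    rw [lintegral_mul_const _ hf, pow_succ']

lemma aux_lintegral_max (a b : ℝ → ENNReal) (ha : Measurable a) (hb : Measurable b) (n : ℕ)
    (i : Fin (n+1)) :
    ∫⁻ u : Fin (n+1) → ℝ, b (u i) * ∏ k : Fin n, (Iio (u i)).indicator a (u (i.succAbove k))
      = ∫⁻ t, b t * (∫⁻ s in Iio t, a s) ^ n := by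
  have e := (volume_preserving_piFinSuccAbove (fun _ : Fin (n+1) => ℝ) i).symm
  rw [← e.lintegral_comp_emb (MeasurableEquiv.measurableEmbedding _)]
  have h1 : ∀ p : ℝ × (Fin n → ℝ),
      b ((MeasurableEquiv.piFinSuccAbove (fun _ : Fin (n+1) => ℝ) i).symm p i) *
        ∏ k : Fin n, (Iio ((MeasurableEquiv.piFinSuccAbove (fun _ : Fin (n+1) => ℝ) i).symm p i)).indicator a
          ((MeasurableEquiv.piFinSuccAbove (fun _ : Fin (n+1) => ℝ) i).symm p (i.succAbove k))
        = b p.1 * ∏ k, (Iio p.1).indicator a (p.2 k) := by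
    intro p
    simp [MeasurableEquiv.piFinSuccAbove, Fin.insertNthEquiv]
  simp_rw [h1]
  have hm : Measurable fun p : ℝ × (Fin n → ℝ) => b p.1 * ∏ k, (Iio p.1).indicator a (p.2 k) := by
    refine (hb.comp measurable_fst).mul (Finset.measurable_prod _ fun k _ => ?_)
    have : (fun p : ℝ × (Fin n → ℝ) => (Iio p.1).indicator a (p.2 k))
        = {p : ℝ × (Fin n → ℝ) | p.2 k < p.1}.indicator (fun p => a (p.2 k)) := by
      ext p; simp [indicator]
    rw [this]
    refine Measurable.indicator (by fun_prop) (measurableSet_lt (by fun_prop) (by fun_prop))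
  rw [Measure.volume_eq_prod, lintegral_prod _ hm.aemeasurable]
  refine lintegral_congr fun t => ?_
  dsimp only
  have hmt : Measurable ((Iio t).indicator a) := ha.indicator measurableSet_Iio
  rw [lintegral_const_mul _ (by fun_prop), aux_lintegral_pow _ hmt, lintegral_indicator measurableSet_Iio]

lemma aux_distinct (n : ℕ) : ∀ᵐ u : Fin n → ℝ, ∀ i j, i ≠ j → u i ≠ u j := by
  rw [ae_all_iff]; intro i
  rw [ae_all_iff]; intro j
  by_cases hij : i = j
  · simp [hij]
  let L : (Fin n → ℝ) →ₗ[ℝ] ℝ := (LinearMap.proj i : (Fin n → ℝ) →ₗ[ℝ] ℝ) - (LinearMap.proj j : (Fin n → ℝ) →ₗ[ℝ] ℝ)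
  have hL : L.ker ≠ ⊤ := by
    intro h
    have : (Pi.single i 1 : Fin n → ℝ) ∈ L.ker := by rw [h]; trivial
    simp [L, LinearMap.mem_ker, Ne.symm hij] at this
  have := Measure.addHaar_submodule (volume : Measure (Fin n → ℝ)) L.ker hL
  refine measure_mono_null ?_ this
  intro u hu
  simp [hij] at hu
  simp [L, LinearMap.mem_ker, hu]

lemma aux_ftc (f g : ℝ → ℝ) (x y : ℝ) (hxy : x ≤ y) (hf : AbsolutelyContinuousOnInterval f x y)
    (hg : ∀ᵐ t, t ∈ Icc x y → HasDerivAt f (g t) t ∧ 0 ≤ g t) :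
    ∫⁻ t in Ioc x y, ENNReal.ofReal (g t) = ENNReal.ofReal (f y - f x) := by
  have hI := hf.intervalIntegrable_deriv
  rw [intervalIntegrable_iff_integrableOn_Ioc_of_le hxy] at hI
  have hg' : ∀ᵐ t ∂(volume.restrict (Ioc x y)), HasDerivAt f (g t) t ∧ 0 ≤ g t := by
    rw [ae_restrict_iff' measurableSet_Ioc]
    filter_upwards [hg] with t ht h
    exact ht (Ioc_subset_Icc_self h)
  rw [← hf.integral_deriv_eq_sub, intervalIntegral.integral_of_le hxy,
    ofReal_integral_eq_lintegral_ofReal hI]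
  · apply lintegral_congr_ae
    filter_upwards [hg'] with t ht
    rw [ht.1.deriv]
  · filter_upwards [hg'] with t ht
    rw [ht.1.deriv]; exact ht.2

lemma aux_F_deriv (D : ℝ) (h F : ℝ → ℝ) (hcont : ContinuousOn h (Icc 0 1))
    (hpos : ∀ t ∈ Ioo (0:ℝ) 1, 0 < h t)
    (hF : ∀ r, F r = ((D - 1) / D) * ∫ s in (1/2 : ℝ)..r, 1 / h s) (t : ℝ) (ht : t ∈ Ioo (0:ℝ) 1) :
    HasDerivAt F (((D - 1) / D) * (1 / h t)) t := by
  have hc : ContinuousOn (fun s => 1 / h s) (Ioo 0 1) :=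
    continuousOn_const.div (hcont.mono Ioo_subset_Icc_self) fun s hs => (hpos s hs).ne'
  have hsub : uIcc (1/2 : ℝ) t ⊆ Ioo 0 1 :=
    (ordConnected_Ioo).uIcc_subset (by norm_num) ht
  have := intervalIntegral.integral_hasDerivAt_right (f := fun s => 1 / h s) (a := 1/2) (b := t)
    ((hc.mono hsub).intervalIntegrable)
    (hc.stronglyMeasurableAtFilter isOpen_Ioo t ht) (hc.continuousAt (isOpen_Ioo.mem_nhds ht))
  have h2 := this.const_mul ((D - 1) / D)
  exact h2.congr_of_eventuallyEq (Filter.Eventually.of_forall hF)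

lemma aux_A (D : ℝ) (hD : 2 ≤ D) (δ δ' h F : ℝ → ℝ) (K : NNReal)
    (hlip : LipschitzOnWith K h (Icc 0 1))
    (hpos : ∀ t ∈ Ioo (0:ℝ) 1, 0 < h t) (hle : ∀ t ∈ Ioo (0:ℝ) 1, h t ≤ t)
    (hh : ∀ r, h r = r - δ r)
    (hF : ∀ r, F r = ((D - 1) / D) * ∫ s in (1/2 : ℝ)..r, 1 / h s)
    (hderiv : ∀ᵐ t, t ∈ Icc (0:ℝ) 1 → HasDerivAt δ (δ' t) t)
    (hd' : ∀ t ∈ Icc (0:ℝ) 1, δ' t ≤ D) (t : ℝ) (ht : t ∈ Ioo (0:ℝ) 1) :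
    ∫⁻ s in Ioc 0 t, ENNReal.ofReal (((D - δ' s) / D) * h s ^ (-1 + 1/D) * Real.exp (F s))
      = ENNReal.ofReal (h t ^ (1/D) * Real.exp (F t)) := by
  have hcont := hlip.continuousOn
  have hFd := aux_F_deriv D h F hcont hpos hF
  have hFc : ContinuousOn F (Ioo 0 1) := fun s hs => (hFd s hs).continuousAt.continuousWithinAt
  have hD0 : 0 < D := by linarith
  -- finite intervals
  have key : ∀ e ∈ Ioc 0 t,
      ∫⁻ s in Ioc e t, ENNReal.ofReal (((D - δ' s) / D) * h s ^ (-1 + 1/D) * Real.exp (F s))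
      = ENNReal.ofReal (h t ^ (1/D) * Real.exp (F t) - h e ^ (1/D) * Real.exp (F e)) := by
    intro e he
    have hsub : Icc e t ⊆ Ioo 0 1 := fun s hs => ⟨lt_of_lt_of_le he.1 hs.1, lt_of_le_of_lt hs.2 ht.2⟩
    have hsub' : Icc e t ⊆ Icc 0 1 := hsub.trans Ioo_subset_Icc_self
    refine aux_ftc (fun s => h s ^ (1/D) * Real.exp (F s)) _ e t he.2 ?_ ?_
    · apply AbsolutelyContinuousOnInterval.mul (f := fun s => h s ^ (1/D)) (g := fun s => Real.exp (F s))
      · obtain ⟨x0, hx0, hmin⟩ := isCompact_Icc.exists_isMinOn (nonempty_Icc.2 he.2) (hcont.mono hsub')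
        have hm := hpos x0 (hsub hx0)
        have hC : ContDiffOn ℝ 1 (fun x : ℝ => x ^ (1/D)) (Icc (h x0) 1) :=
          fun x hx => (Real.contDiffAt_rpow_const_of_ne (lt_of_lt_of_le hm hx.1).ne').contDiffWithinAt
        obtain ⟨K2, hK2⟩ := hC.exists_lipschitzOnWith (by decide) (convex_Icc _ _) isCompact_Icc
        have hmaps : MapsTo h (Icc e t) (Icc (h x0) 1) := fun s hs =>
          ⟨hmin hs, (hle s (hsub hs)).trans (hsub hs).2.le⟩
        have := hK2.comp (hlip.mono hsub') hmaps
        apply LipschitzOnWith.absolutelyContinuousOnInterval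
        rw [uIcc_of_le he.2]
        exact this
      · have hE : ∀ s ∈ Icc e t, HasDerivWithinAt (fun s => Real.exp (F s))
            (Real.exp (F s) * (((D - 1) / D) * (1 / h s))) (Icc e t) s :=
          fun s hs => (hFd s (hsub hs)).exp.hasDerivWithinAt
        have hEc : ContinuousOn (fun s => Real.exp (F s) * (((D - 1) / D) * (1 / h s))) (Icc e t) := by
          refine (Real.continuous_exp.comp_continuousOn (hFc.mono hsub)).mul
            (continuousOn_const.mul (continuousOn_const.div (hcont.mono hsub') ?_))
          exact fun s hs => (hpos s (hsub hs)).ne'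
        obtain ⟨C, hC⟩ := isCompact_Icc.exists_bound_of_continuousOn hEc
        have := (convex_Icc e t).lipschitzOnWith_of_nnnorm_hasDerivWithin_le (C := C.toNNReal) hE
          (fun s hs => by
            rw [← NNReal.coe_le_coe, coe_nnnorm]
            exact (hC s hs).trans (Real.le_coe_toNNReal C))
        apply LipschitzOnWith.absolutelyContinuousOnInterval
        rwa [uIcc_of_le he.2]
    · filter_upwards [hderiv] with s hs hsI
      have hs1 := hs (hsub' hsI)
      have hp := hpos s (hsub hsI)
      constructor
      · have hhd : HasDerivAt h (1 - δ' s) s :=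
          ((hasDerivAt_id s).sub hs1).congr_of_eventuallyEq (Filter.Eventually.of_forall hh)
        have h3 := (hhd.rpow_const (p := 1/D) (Or.inl hp.ne')).mul (hFd s (hsub hsI)).exp
        refine h3.congr_deriv ?_
        have e1 : h s ^ (1/D) = h s ^ (-1 + 1/D) * h s := by
          conv_rhs => rw [← Real.rpow_add_one hp.ne']
          congr 1; ring
        have e2 : (1/D - 1) = -1 + 1/D := by ring
        rw [e1, e2]
        field_simp
        ring
      · have := hd' s (hsub' hsI)
        have : 0 ≤ D - δ' s := by linarith
        positivity
  -- limit
  have hlim : Filter.Tendsto (fun e => h e ^ (1/D) * Real.exp (F e)) (nhdsWithin 0 (Ioi 0)) (nhds 0) := by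
    have hz : Filter.Tendsto (fun e : ℝ => e ^ (1/D)) (nhdsWithin 0 (Ioi 0)) (nhds 0) := by
      have : ContinuousAt (fun e : ℝ => e ^ (1/D)) 0 :=
        Real.continuousAt_rpow_const _ _ (Or.inr (by positivity))
      have h4 := this.tendsto.mono_left (nhdsWithin_le_nhds (s := Ioi 0))
      simpa [Real.zero_rpow (one_div_pos.2 hD0).ne', hD0.ne'] using h4
    have hev : ∀ᶠ e in nhdsWithin (0:ℝ) (Ioi 0), e ∈ Ioo (0:ℝ) (1/2) :=
      Ioo_mem_nhdsGT (by norm_num)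
    refine tendsto_of_tendsto_of_tendsto_of_le_of_le' tendsto_const_nhds hz ?_ ?_
    · filter_upwards [hev] with e he
      have := hpos e ⟨he.1, by linarith [he.2]⟩
      positivity
    · filter_upwards [hev] with e he
      have heI : e ∈ Ioo (0:ℝ) 1 := ⟨he.1, by linarith [he.2]⟩
      have hp := hpos e heI
      have hFe : F e ≤ 0 := by
        rw [hF, intervalIntegral.integral_symm, mul_neg, neg_nonpos]
        refine mul_nonneg (div_nonneg (by linarith) hD0.le) ?_
        refine intervalIntegral.integral_nonneg he.2.le fun s hs => ?_
        exact one_div_nonneg.2 (hpos s ⟨lt_of_lt_of_le he.1 hs.1, by linarith [hs.2]⟩).le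
      calc h e ^ (1/D) * Real.exp (F e) ≤ e ^ (1/D) * 1 := by
            gcongr
            · exact Real.rpow_nonneg he.1.le _
            · exact hle e heI
            · simpa using hFe
        _ = _ := mul_one _
  have hlim2 : Filter.Tendsto (fun e => ∫⁻ s in Ioc e t, ENNReal.ofReal
      (((D - δ' s) / D) * h s ^ (-1 + 1/D) * Real.exp (F s))) (nhdsWithin 0 (Ioi 0))
      (nhds (ENNReal.ofReal (h t ^ (1/D) * Real.exp (F t)))) := by
    have h5 := ENNReal.tendsto_ofReal (hlim.const_sub (h t ^ (1/D) * Real.exp (F t)))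
    rw [sub_zero] at h5
    refine h5.congr' ?_
    filter_upwards [Ioc_mem_nhdsGT ht.1] with e he
    exact (key e he).symm
  have hm : AEMeasurable (fun s => ENNReal.ofReal
      (((D - δ' s) / D) * h s ^ (-1 + 1/D) * Real.exp (F s))) (volume.restrict (Ioc 0 t)) := by
    have hsub : Ioc 0 t ⊆ Ioo 0 1 := fun s hs => ⟨hs.1, lt_of_le_of_lt hs.2 ht.2⟩
    apply AEMeasurable.ennreal_ofReal
    have m1 : AEMeasurable δ' (volume.restrict (Ioc 0 t)) := by
      refine (measurable_deriv δ).aemeasurable.congr ?_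
      have : ∀ᵐ s ∂(volume.restrict (Ioc 0 t)), HasDerivAt δ (δ' s) s := by
        rw [ae_restrict_iff' measurableSet_Ioc]
        filter_upwards [hderiv] with s hs hI
        exact hs (Ioo_subset_Icc_self (hsub hI))
      filter_upwards [this] with s hs using hs.deriv
    have m2 : AEMeasurable h (volume.restrict (Ioc 0 t)) :=
      (hcont.mono (hsub.trans Ioo_subset_Icc_self)).aemeasurable measurableSet_Ioc
    have m3 : AEMeasurable F (volume.restrict (Ioc 0 t)) :=
      (hFc.mono hsub).aemeasurable measurableSet_Ioc
    exact (((m1.const_sub D).div_const D).mul (m2.pow_const _)).mul (Real.measurable_exp.comp_aemeasurable m3)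
  have hcov : AECover (volume.restrict (Ioc 0 t)) (nhdsWithin (0:ℝ) (Ioi 0)) (fun e => Ioc e t) :=
    aecover_Ioc_of_Ioc (Filter.tendsto_id.mono_left nhdsWithin_le_nhds) tendsto_const_nhds
  refine hcov.lintegral_eq_of_tendsto _ hm (hlim2.congr' ?_)
  filter_upwards [self_mem_nhdsWithin] with e he
  rw [Measure.restrict_restrict measurableSet_Ioc, inter_eq_left.2 (Ioc_subset_Ioc_left (le_of_lt he))]

lemma aux_meas_ind (f : ℝ → ℝ) (hf : ContinuousOn f (Ioo 0 1)) :
    Measurable ((Ioo (0:ℝ) 1).indicator f) := by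
  rw [← Set.piecewise_eq_indicator]
  exact ContinuousOn.measurable_piecewise hf continuousOn_const measurableSet_Ioo

lemma aux_main (n : ℕ) (hn : 1 ≤ n) (D : ℝ) (hDn : D = n + 1) (δ δ' : ℝ → ℝ)
    (hmono : MonotoneOn δ (Set.Icc 0 1))
    (hlip : ∀ s ∈ Set.Icc (0:ℝ) 1, ∀ t ∈ Set.Icc (0:ℝ) 1,
      |δ s - δ t| ≤ D * |s - t|)
    (h0 : δ 0 = 0)
    (hlt : ∀ t ∈ Set.Ioo (0:ℝ) 1, δ t < t)
    (hderiv : ∀ᵐ t ∂(volume.restrict (Set.Icc (0:ℝ) 1)), HasDerivAt δ (δ' t) t)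
    (hd' : ∀ t ∈ Set.Icc (0:ℝ) 1, δ' t ∈ Set.Icc (0:ℝ) D)
    (h F a b : ℝ → ℝ)
    (hh : ∀ r, h r = r - δ r)
    (hF : ∀ r, F r = ((D - 1) / D) * ∫ s in (1/2 : ℝ)..r, 1 / h s)
    (ha : ∀ r, a r = ((D - δ' r) / D) * h r ^ (-1 + 1/D) * Real.exp (F r))
    (hb : ∀ r, b r = (δ' r / D) * h r ^ (-1 + 1/D) *
      Real.exp (-(D - 1) * F r))
    (c : (Fin (n+1) → ℝ) → ℝ)
    (hc : ∀ x, c x = b (⨆ i, x i) *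
      ∏ i ∈ Finset.univ.filter (fun i => x i ≠ ⨆ j, x j), a (x i)) :
    ∀ r ∈ Set.Icc (0:ℝ) 1,
      (∫ u in Set.univ.pi (fun _ : Fin (n+1) => Set.Icc (0:ℝ) 1),
        c u * (if (⨆ i, u i) ≤ r then 1 else 0)) = δ r := by
  intro r hr
  have hn' : (1:ℝ) ≤ n := by exact_mod_cast hn
  have hD : 2 ≤ D := by linarith
  have hD0 : 0 < D := by linarith
  rw [ae_restrict_iff' measurableSet_Icc] at hderiv
  have hpos : ∀ t ∈ Ioo (0:ℝ) 1, 0 < h t := fun t ht => by rw [hh]; linarith [hlt t ht]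
  have hδnn : ∀ t ∈ Icc (0:ℝ) 1, 0 ≤ δ t := fun t ht => by
    rw [← h0]; exact hmono (by simp) ht ht.1
  have hle : ∀ t ∈ Ioo (0:ℝ) 1, h t ≤ t := fun t ht => by
    rw [hh]; linarith [hδnn t (Ioo_subset_Icc_self ht)]
  have hδlip : LipschitzOnWith D.toNNReal δ (Icc 0 1) := by
    refine LipschitzOnWith.of_dist_le_mul fun s hs t ht => ?_
    rw [Real.coe_toNNReal _ hD0.le, Real.dist_eq, Real.dist_eq]
    exact hlip s hs t ht
  have hhlip : LipschitzOnWith (1 + D.toNNReal) h (Icc 0 1) := by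
    have := (LipschitzWith.id (α := ℝ)).lipschitzOnWith (s := Icc 0 1) |>.sub hδlip
    have e : h = fun x => id x - δ x := funext hh
    rw [e]; exact this
  have hcont := hhlip.continuousOn
  have hFd := aux_F_deriv D h F hcont hpos hF
  have hFc : ContinuousOn F (Ioo 0 1) := fun s hs => (hFd s hs).continuousAt.continuousWithinAt
  have hhc : ContinuousOn (fun s => h s ^ (-1 + 1/D)) (Ioo 0 1) :=
    (hcont.mono Ioo_subset_Icc_self).rpow_const fun s hs => Or.inl (hpos s hs).ne'
  set P : ℝ → ℝ := (Ioo (0:ℝ) 1).indicator (fun s => h s ^ (-1 + 1/D) * Real.exp (F s)) with hP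
  set Q : ℝ → ℝ := (Ioo (0:ℝ) 1).indicator
    (fun s => h s ^ (-1 + 1/D) * Real.exp (-(D - 1) * F s)) with hQ
  have hPm : Measurable P := aux_meas_ind _ (hhc.mul (Real.continuous_exp.comp_continuousOn hFc))
  have hQm : Measurable Q := aux_meas_ind _
    (hhc.mul (Real.continuous_exp.comp_continuousOn (continuousOn_const.mul hFc)))
  have hdm : Measurable (deriv δ) := measurable_deriv δ
  let aE : ℝ → ENNReal := fun s => ENNReal.ofReal ((D - deriv δ s) / D * P s)
  let bE : ℝ → ENNReal := (Iic r).indicator (fun s => ENNReal.ofReal (deriv δ s / D * Q s))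
  have haE : Measurable aE := by fun_prop
  have hbE : Measurable bE := Measurable.indicator (by fun_prop) measurableSet_Iic
  have haE0 : ∀ s, s ∉ Icc (0:ℝ) 1 → aE s = 0 := fun s hs => by
    have : s ∉ Ioo (0:ℝ) 1 := fun h => hs (Ioo_subset_Icc_self h)
    simp only [aE, hP, indicator_of_notMem this]; simp
  have hbE0' : ∀ s, s ∉ Ioo (0:ℝ) 1 → bE s = 0 := fun s hs => by
    have : Q s = 0 := by rw [hQ]; exact indicator_of_notMem hs _
    simp only [bE, indicator, this]; simp
  have hbE0 : ∀ s, s ∉ Icc (0:ℝ) 1 → bE s = 0 := fun s hs =>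
    hbE0' s fun h => hs (Ioo_subset_Icc_self h)
  -- good points
  have hgood : ∀ᵐ t : ℝ, t ∈ Icc (0:ℝ) 1 → t ∈ Ioo (0:ℝ) 1 ∧ HasDerivAt δ (δ' t) t := by
    have z0 : ∀ᵐ t : ℝ, t ≠ 0 := by simp [ae_iff]
    have z1 : ∀ᵐ t : ℝ, t ≠ 1 := by simp [ae_iff]
    filter_upwards [hderiv, z0, z1] with t ht t0 t1 hI
    exact ⟨⟨lt_of_le_of_ne hI.1 (Ne.symm t0), lt_of_le_of_ne hI.2 t1⟩, ht hI⟩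
  have haEa : ∀ t, t ∈ Ioo (0:ℝ) 1 → HasDerivAt δ (δ' t) t → aE t = ENNReal.ofReal (a t) := by
    intro t ht hdt
    simp only [aE, hP, indicator_of_mem ht, hdt.deriv, ha]
    rw [mul_assoc]
  have hbEb : ∀ t, t ∈ Ioo (0:ℝ) 1 → HasDerivAt δ (δ' t) t →
      bE t = if t ≤ r then ENNReal.ofReal (b t) else 0 := by
    intro t ht hdt
    simp only [bE, hQ, indicator, mem_Iic]
    rw [if_pos ht, hdt.deriv, hb, mul_assoc]
  have hann : ∀ t ∈ Ioo (0:ℝ) 1, 0 ≤ a t := fun t ht => by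
    have h1 := (hd' t (Ioo_subset_Icc_self ht)).2
    have h2 := hpos t ht
    have : 0 ≤ D - δ' t := by linarith
    rw [ha]; positivity
  have hbnn : ∀ t ∈ Ioo (0:ℝ) 1, 0 ≤ b t := fun t ht => by
    have h1 := (hd' t (Ioo_subset_Icc_self ht)).1
    have h2 := hpos t ht
    rw [hb]; positivity
  -- inner integral
  have hA : ∀ t ∈ Ioo (0:ℝ) 1, ∫⁻ s in Iio t, aE s
      = ENNReal.ofReal (h t ^ (1/D) * Real.exp (F t)) := by
    intro t ht
    rw [← aux_A D hD δ δ' h F _ hhlip hpos hle hh hF hderiv (fun t ht => (hd' t ht).2) t ht,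
      ← lintegral_indicator measurableSet_Iio, ← lintegral_indicator measurableSet_Ioc]
    apply lintegral_congr_ae
    have zt : ∀ᵐ s : ℝ, s ≠ t := by simp [ae_iff]
    have z0 : ∀ᵐ s : ℝ, s ≠ 0 := by simp [ae_iff]
    filter_upwards [hgood, zt, z0] with s hs hst hs0
    by_cases hs1 : s ∈ Icc (0:ℝ) 1
    · obtain ⟨g1, g2⟩ := hs hs1
      by_cases hst' : s < t
      · rw [indicator_of_mem (by exact hst'), indicator_of_mem (by exact ⟨g1.1, hst'.le⟩), haEa s g1 g2, ha]
      · rw [indicator_of_notMem (by exact hst'), indicator_of_notMem]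
        intro hx
        exact hst' (lt_of_le_of_ne hx.2 hst)
    · rw [indicator_of_notMem (s := Ioc 0 t) (fun hx => hs1 ⟨hx.1.le, hx.2.trans ht.2.le⟩)]
      by_cases hst' : s < t
      · rw [indicator_of_mem (by exact hst'), haE0 s hs1]
      · rw [indicator_of_notMem (by exact hst')]
  -- outer integral
  have hB : ∫⁻ t, bE t * (∫⁻ s in Iio t, aE s) ^ n = ENNReal.ofReal (δ r / D) := by
    have hac : AbsolutelyContinuousOnInterval (fun t => D⁻¹ * δ t) 0 r := by
      apply AbsolutelyContinuousOnInterval.const_mul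
      apply LipschitzOnWith.absolutelyContinuousOnInterval (K := D.toNNReal)
      rw [uIcc_of_le hr.1]
      exact hδlip.mono (Icc_subset_Icc_right hr.2)
    have := aux_ftc _ (fun t => D⁻¹ * δ' t) 0 r hr.1 hac (by
      filter_upwards [hderiv] with t ht hI
      have hI' : t ∈ Icc (0:ℝ) 1 := ⟨hI.1, hI.2.trans hr.2⟩
      have := (hd' t hI').1
      exact ⟨(ht hI').const_mul _, by positivity⟩)
    have e : δ r / D = D⁻¹ * δ r - D⁻¹ * δ 0 := by rw [h0]; ring
    rw [e, ← this, ← lintegral_indicator measurableSet_Ioc]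
    apply lintegral_congr_ae
    have z0 : ∀ᵐ s : ℝ, s ≠ 0 := by simp [ae_iff]
    filter_upwards [hgood, z0] with t ht ht0
    by_cases hI : t ∈ Icc (0:ℝ) 1
    · obtain ⟨g1, g2⟩ := ht hI
      rw [hbEb t g1 g2, hA t g1]
      by_cases htr : t ≤ r
      · rw [if_pos htr, indicator_of_mem (by exact ⟨g1.1, htr⟩), ← ENNReal.ofReal_pow, ← ENNReal.ofReal_mul (hbnn t g1)]
        · congr 1
          have hp := hpos t g1
          have e1 : h t ^ (-1 + 1/D) * (h t ^ (1/D)) ^ n = 1 := by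
            rw [← Real.rpow_mul_natCast hp.le, ← Real.rpow_add hp]
            have : -1 + 1/D + 1/D * n = 0 := by
              rw [hDn] at hD0 ⊢; field_simp; ring
            rw [this, Real.rpow_zero]
          have e2 : Real.exp (-(D - 1) * F t) * Real.exp (F t) ^ n = 1 := by
            rw [← Real.exp_nat_mul, ← Real.exp_add, Real.exp_eq_one_iff, hDn]; ring
          rw [hb, mul_pow]
          calc _ = δ' t / D * (h t ^ (-1 + 1/D) * (h t ^ (1/D)) ^ n) *
                (Real.exp (-(D - 1) * F t) * Real.exp (F t) ^ n) := by ring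
            _ = _ := by rw [e1, e2]; ring
        · have hp := hpos t g1
          positivity
      · rw [if_neg htr, indicator_of_notMem (fun hx => htr hx.2), zero_mul]
    · rw [hbE0 t hI, zero_mul, indicator_of_notMem]
      exact fun hx => hI ⟨hx.1.le, hx.2.trans hr.2⟩
  -- the sum
  let G : Fin (n+1) → (Fin (n+1) → ℝ) → ENNReal := fun i u =>
    bE (u i) * ∏ k : Fin n, (Iio (u i)).indicator aE (u (i.succAbove k))
  have hGm : ∀ i, Measurable (G i) := by
    intro i
    refine (hbE.comp (measurable_pi_apply i)).mul (Finset.measurable_prod _ fun k _ => ?_)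
    have : (fun u : Fin (n+1) → ℝ => (Iio (u i)).indicator aE (u (i.succAbove k)))
        = {u : Fin (n+1) → ℝ | u (i.succAbove k) < u i}.indicator (fun u => aE (u (i.succAbove k))) := by
      ext p; simp [indicator]
    rw [this]
    exact Measurable.indicator (by fun_prop) (measurableSet_lt (by fun_prop) (by fun_prop))
  have hGint : ∀ i, ∫⁻ u, G i u = ENNReal.ofReal (δ r / D) := fun i => by
    rw [← hB]; exact aux_lintegral_max aE bE haE hbE n i
  have hSm : Measurable (fun u => ∑ i, G i u) := by fun_prop
  have hSint : ∫⁻ u, ∑ i, G i u = ENNReal.ofReal (δ r) := by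
    rw [lintegral_finsetSum _ fun i _ => hGm i]
    simp only [hGint, Finset.sum_const, Finset.card_univ, Fintype.card_fin, nsmul_eq_mul]
    rw [← ENNReal.ofReal_natCast, ← ENNReal.ofReal_mul (by positivity)]
    congr 1
    push_cast
    rw [← hDn]; field_simp
  have hGsupp : ∀ i u, u ∉ Set.univ.pi (fun _ : Fin (n+1) => Set.Icc (0:ℝ) 1) → G i u = 0 := by
    intro i u hu
    simp only [mem_univ_pi, not_forall] at hu
    obtain ⟨j, hj⟩ := hu
    by_cases hji : j = i
    · subst hji; simp only [G]; rw [hbE0 _ hj, zero_mul]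
    · obtain ⟨k, rfl⟩ := Fin.exists_succAbove_eq hji
      simp only [G]
      rw [Finset.prod_eq_zero (Finset.mem_univ k), mul_zero]
      simp [indicator, haE0 _ hj]
  have hSset : ∫⁻ u in Set.univ.pi (fun _ : Fin (n+1) => Set.Icc (0:ℝ) 1), ∑ i, G i u
      = ENNReal.ofReal (δ r) := by
    rw [← hSint, ← lintegral_indicator (MeasurableSet.univ_pi fun _ => measurableSet_Icc)]
    congr 1
    rw [indicator_eq_self]
    intro u hu
    by_contra hn
    exact hu (Finset.sum_eq_zero fun i _ => hGsupp i u hn)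
  have hcoord : ∀ᵐ u : Fin (n+1) → ℝ, ∀ i, u i ∈ Icc (0:ℝ) 1 →
      u i ∈ Ioo (0:ℝ) 1 ∧ HasDerivAt δ (δ' (u i)) (u i) := by
    rw [ae_all_iff]; intro i
    exact (Measure.quasiMeasurePreserving_eval (μ := fun _ : Fin (n+1) => (volume : Measure ℝ)) i).ae hgood
  have hpt : ∀ᵐ u ∂(volume.restrict (Set.univ.pi (fun _ : Fin (n+1) => Set.Icc (0:ℝ) 1))),
      c u * (if (⨆ i, u i) ≤ r then 1 else 0) = (∑ i, G i u).toReal := by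
    rw [ae_restrict_iff' (MeasurableSet.univ_pi fun _ => measurableSet_Icc)]
    filter_upwards [hcoord, aux_distinct (n+1)] with u hu1 hu2 hu3
    have hu4 := fun i => hu1 i (hu3 i (mem_univ i))
    obtain ⟨m, hm⟩ := Finite.exists_max u
    have hsup : (⨆ i, u i) = u m :=
      le_antisymm (ciSup_le hm) (le_ciSup (finite_range u).bddAbove m)
    have hlt' : ∀ k, u (m.succAbove k) < u m := fun k =>
      lt_of_le_of_ne (hm _) (hu2 _ _ (Fin.succAbove_ne m k))
    have hfilt : Finset.univ.filter (fun i => u i ≠ u m) = Finset.univ.map (Fin.succAboveEmb m) := by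
      ext i
      simp only [Finset.mem_filter, Finset.mem_univ, true_and, Finset.mem_map]
      constructor
      · intro hi
        obtain ⟨k, hk⟩ := Fin.exists_succAbove_eq (x := i) (y := m) (fun e => hi (by rw [e]))
        exact ⟨k, hk⟩
      · rintro ⟨k, rfl⟩
        exact (hlt' k).ne
    have hzero : ∀ i, i ≠ m → G i u = 0 := by
      intro i hi
      obtain ⟨k, hk⟩ := Fin.exists_succAbove_eq (x := m) (y := i) (Ne.symm hi)
      simp only [G]
      rw [Finset.prod_eq_zero (Finset.mem_univ k), mul_zero]
      rw [hk, indicator_of_notMem]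
      exact not_lt.2 (hm i)
    rw [Finset.sum_eq_single m (fun i _ hi => hzero i hi) (by simp), hc, hsup, hfilt, Finset.prod_map]
    simp only [G]
    rw [ENNReal.toReal_mul, ENNReal.toReal_prod, hbEb _ (hu4 m).1 (hu4 m).2]
    have hprod : ∏ k, ((Iio (u m)).indicator aE (u (m.succAbove k))).toReal = ∏ k, a (u (m.succAbove k)) := by
      refine Finset.prod_congr rfl fun k _ => ?_
      rw [indicator_of_mem (by exact hlt' k), haEa _ (hu4 _).1 (hu4 _).2,
        ENNReal.toReal_ofReal (hann _ (hu4 _).1)]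
    rw [hprod]
    by_cases hr' : u m ≤ r
    · simp [hr', ENNReal.toReal_ofReal (hbnn _ (hu4 m).1)]
    · simp [hr']
  rw [integral_congr_ae hpt, integral_toReal hSm.aemeasurable, hSset, ENNReal.toReal_ofReal (hδnn r hr)]
  refine ae_lt_top hSm ?_
  rw [hSset]; exact ENNReal.ofReal_ne_top

/-- The copula with density c_δ has diagonal section δ:
∫ c_δ(u) 1{max(u) ≤ r} du = δ(r) for all r ∈ [0,1]. -/
theorem c_delta_diagonal_section
    (d : ℕ) (hd : 2 ≤ d) (δ δ' : ℝ → ℝ)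
    (hmono : MonotoneOn δ (Set.Icc 0 1))
    (hlip : ∀ s ∈ Set.Icc (0:ℝ) 1, ∀ t ∈ Set.Icc (0:ℝ) 1,
      |δ s - δ t| ≤ (d : ℝ) * |s - t|)
    (h0 : δ 0 = 0) (h1 : δ 1 = 1)
    (hlt : ∀ t ∈ Set.Ioo (0:ℝ) 1, δ t < t)
    (hderiv : ∀ᵐ t ∂(volume.restrict (Set.Icc (0:ℝ) 1)), HasDerivAt δ (δ' t) t)
    (hd' : ∀ t ∈ Set.Icc (0:ℝ) 1, δ' t ∈ Set.Icc (0:ℝ) (d:ℝ))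
    (h F a b : ℝ → ℝ)
    (hh : ∀ r, h r = r - δ r)
    (hF : ∀ r, F r = (((d:ℝ) - 1) / d) * ∫ s in (1/2 : ℝ)..r, 1 / h s)
    (ha : ∀ r, a r = (((d:ℝ) - δ' r) / d) * h r ^ (-1 + 1/(d:ℝ)) * Real.exp (F r))
    (hb : ∀ r, b r = (δ' r / d) * h r ^ (-1 + 1/(d:ℝ)) *
      Real.exp (-((d:ℝ) - 1) * F r))
    (c : (Fin d → ℝ) → ℝ)
    (hc : ∀ x, c x = b (⨆ i, x i) *
      ∏ i ∈ Finset.univ.filter (fun i => x i ≠ ⨆ j, x j), a (x i)) :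
    ∀ r ∈ Set.Icc (0:ℝ) 1,
      (∫ u in Set.univ.pi (fun _ : Fin d => Set.Icc (0:ℝ) 1),
        c u * (if (⨆ i, u i) ≤ r then 1 else 0)) = δ r := by
  obtain ⟨n, rfl⟩ : ∃ n, d = n + 1 := ⟨d - 1, by omega⟩
  exact aux_main n (by omega) _ (by push_cast; ring) δ δ' hmono hlip h0 hlt hderiv hd' h F a b
    hh hF ha hb c hc
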